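/- Let u ≥ 1, let (t_n)_{n≥0} be a strictly increasing sequence in [0,1] with t_0 = 0 and supremum T ≤ 1, and let (y_n)_{n≥0} be complex numbers satisfying |y_n − y_m| ≤ (t_n − t_m)^{1/u} for all m < n. Let ρ : [0, T) → ℂ be the piecewise-linear interpolant, i.e. ρ(t) = y_n + ((y_{n+1} − y_n)/(t_{n+1} − t_n)) (t − t_n) for t ∈ [t_n, t_{n+1}). Then |ρ(t) − ρ(s)| ≤ 3 |t − s|^{1/u} for all s, t ∈ [0, T). -/

import Mathlib

/-!
Let `ω` be a concave modulus of continuity with `0 ≤ ω 0`. The pairs `(v, r)` with `0 ≤ r` and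
`‖v‖ ≤ ω r` form a convex set, and the hypothesis on the knots says that the differences
`(y n - y m, t n - t m)` with `m ≤ n` belong to it. If `s ≤ x` lie in different pieces of the
partition, then the graph points over `s` and `x` lie on segments joining consecutive knots, so
their difference is a convex combination of four differences of knots. If `s` and `x` lie in the
same piece, it is a multiple of one such difference by a factor in `[0, 1]`. In both cases
`(ρ x - ρ s, x - s)` belongs to the convex set, so the interpolant has the same modulus `ω` as its
knots. For `ω r = r ^ (1 / u)` this gives the constant `1` in place of `3`.
-/

open Set AffineMap

open scoped Pointwise

theorem sub_mem_of_mem_segment {𝕜 V : Type*} [Field 𝕜] [LinearOrder 𝕜] [IsStrictOrderedRing 𝕜]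
    [AddCommGroup V] [Module 𝕜 V] {S : Set V} (hS : Convex 𝕜 S) {a b c d p q : V}
    (hS_ends : ({c, d} : Set V) - {a, b} ⊆ S) (hp : p ∈ segment 𝕜 a b)
    (hq : q ∈ segment 𝕜 c d) : q - p ∈ S := by
  apply convexHull_min hS_ends hS
  rw [convexHull_sub, convexHull_pair, convexHull_pair]
  exact sub_mem_sub hq hp

theorem sub_div_sub_mem_Icc_zero_one {𝕜 : Type*} [Field 𝕜] [LinearOrder 𝕜]
    [IsStrictOrderedRing 𝕜] {a b s x : 𝕜} (has : a ≤ s) (hsx : s ≤ x) (hxb : x ≤ b) :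
    (x - s) / (b - a) ∈ Icc (0 : 𝕜) 1 :=
  have h_len : 0 ≤ b - a := sub_nonneg.2 (has.trans (hsx.trans hxb))
  ⟨div_nonneg (sub_nonneg.2 hsx) h_len, div_le_one_of_le₀ (sub_le_sub hxb has) h_len⟩

theorem exists_mem_Ico_map_succ_of_isLUB {α : Type*} [LinearOrder α] {t : ℕ → α} {T x : α}
    (hT : IsLUB (range t) T) (hx : x ∈ Ico (t 0) T) : ∃ n, x ∈ Ico (t n) (t (n + 1)) := by
  obtain ⟨_, ⟨N, rfl⟩, hxN⟩ := (lt_isLUB_iff hT).1 hx.2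
  have hx_mem := Ico_subset_biUnion_Ico N t ⟨hx.1, hxN⟩
  simp only [mem_iUnion] at hx_mem
  obtain ⟨n, -, hn⟩ := hx_mem
  exact ⟨n, hn⟩

section Modulus

variable {E : Type*} [SeminormedAddCommGroup E]

variable (E) in
/-- The increments `(v, r)` in space and time that the modulus of continuity `ω` allows: a function
`f` has modulus `ω` when `(f x - f s, x - s)` is in this set for all `s ≤ x`. -/
def modulusRegion (ω : ℝ → ℝ) : Set (E × ℝ) :=
  {z | 0 ≤ z.2 ∧ ‖z.1‖ ≤ ω z.2}

theorem zero_mem_modulusRegion {ω : ℝ → ℝ} (hω0 : 0 ≤ ω 0) : (0 : E × ℝ) ∈ modulusRegion E ω :=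
  ⟨le_rfl, by simpa using hω0⟩

theorem convex_modulusRegion [NormedSpace ℝ E] {ω : ℝ → ℝ} (hω : ConcaveOn ℝ (Ici 0) ω) :
    Convex ℝ (modulusRegion E ω) := by
  have hω_snd := hω.comp_linearMap (LinearMap.snd ℝ E ℝ)
  have h_norm := (convexOn_univ_norm (E := E)).comp_linearMap (LinearMap.fst ℝ E ℝ)
  have h_gap := hω_snd.sub (h_norm.subset (subset_univ _) hω_snd.1)
  simpa [modulusRegion] using h_gap.convex_ge 0

theorem knot_sub_knot_mem_modulusRegion {t : ℕ → ℝ} {y : ℕ → E} {ω : ℝ → ℝ} (hω0 : 0 ≤ ω 0)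
    (ht : Monotone t) (hy : ∀ m n, m < n → ‖y n - y m‖ ≤ ω (t n - t m)) (m n : ℕ) (hmn : m ≤ n) :
    (y n, t n) - (y m, t m) ∈ modulusRegion E ω := by
  rcases hmn.eq_or_lt with rfl | hmn
  · rw [sub_self]
    exact zero_mem_modulusRegion hω0
  · exact ⟨sub_nonneg.2 (ht hmn.le), hy m n hmn⟩

end Modulus

section Interpolant

variable {E : Type*} [SeminormedAddCommGroup E] [NormedSpace ℝ E]

/-- `ρ` interpolates linearly between the values `y n` at the knots `t n`. Nothing is required of
`ρ` outside the half-open pieces `[t n, t (n + 1))`, so `t` need not be bounded and `ρ` may be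
arbitrary from the supremum of `t` on. -/
def IsLinearInterpolant (t : ℕ → ℝ) (y : ℕ → E) (ρ : ℝ → E) : Prop :=
  ∀ n, ∀ x ∈ Ico (t n) (t (n + 1)),
    ρ x = lineMap (y n) (y (n + 1)) ((x - t n) / (t (n + 1) - t n))

variable {t : ℕ → ℝ} {y : ℕ → E} {ρ : ℝ → E} {ω : ℝ → ℝ}

namespace IsLinearInterpolant

theorem graph_eq_lineMap (hρ : IsLinearInterpolant t y ρ) {n : ℕ} {x : ℝ}
    (hx : x ∈ Ico (t n) (t (n + 1))) :
    (ρ x, x) =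
      lineMap (y n, t n) (y (n + 1), t (n + 1)) ((x - t n) / (t (n + 1) - t n)) := by
  have h_len : t (n + 1) - t n ≠ 0 := (sub_pos.2 (hx.1.trans_lt hx.2)).ne'
  ext
  · rw [fst_lineMap, hρ n x hx]
  · rw [snd_lineMap, lineMap_apply_module', smul_eq_mul, div_mul_cancel₀ _ h_len, sub_add_cancel]

theorem graph_mem_segment (hρ : IsLinearInterpolant t y ρ) {n : ℕ} {x : ℝ}
    (hx : x ∈ Ico (t n) (t (n + 1))) :
    (ρ x, x) ∈ segment ℝ (y n, t n) (y (n + 1), t (n + 1)) := by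
  rw [hρ.graph_eq_lineMap hx]
  exact lineMap_mem_segment _ _ _ (sub_div_sub_mem_Icc_zero_one le_rfl hx.1 hx.2.le)

theorem graph_sub_graph (hρ : IsLinearInterpolant t y ρ) {n : ℕ} {s x : ℝ}
    (hs : s ∈ Ico (t n) (t (n + 1))) (hx : x ∈ Ico (t n) (t (n + 1))) :
    (ρ x, x) - (ρ s, s) =
      ((x - s) / (t (n + 1) - t n)) • ((y (n + 1), t (n + 1)) - (y n, t n)) := by
  rw [hρ.graph_eq_lineMap hs, hρ.graph_eq_lineMap hx, lineMap_apply_module',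
    lineMap_apply_module', add_sub_add_right_eq_sub, ← sub_smul, ← sub_div,
    sub_sub_sub_cancel_right]

theorem graph_sub_graph_mem_modulusRegion (hω : ConcaveOn ℝ (Ici 0) ω) (hω0 : 0 ≤ ω 0)
    (ht : Monotone t) (hy : ∀ m n, m < n → ‖y n - y m‖ ≤ ω (t n - t m))
    (hρ : IsLinearInterpolant t y ρ) {m n : ℕ} {s x : ℝ} (hs : s ∈ Ico (t m) (t (m + 1)))
    (hx : x ∈ Ico (t n) (t (n + 1))) (hsx : s ≤ x) :
    (ρ x, x) - (ρ s, s) ∈ modulusRegion E ω := by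
  have hS := convex_modulusRegion (E := E) hω
  have h_knots := knot_sub_knot_mem_modulusRegion hω0 ht hy
  have hmn : m ≤ n := Nat.lt_succ_iff.1 (ht.reflect_lt ((hs.1.trans hsx).trans_lt hx.2))
  rcases hmn.eq_or_lt with rfl | hmn
  · rw [hρ.graph_sub_graph hs hx]
    exact hS.smul_mem_of_zero_mem (zero_mem_modulusRegion hω0) (h_knots m (m + 1) m.le_succ)
      (sub_div_sub_mem_Icc_zero_one hs.1 hsx hx.2.le)
  · refine sub_mem_of_mem_segment hS ?_ (hρ.graph_mem_segment hs) (hρ.graph_mem_segment hx)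
    rintro _ ⟨_, rfl | rfl, _, rfl | rfl, rfl⟩ <;> exact h_knots _ _ (by lia)

end IsLinearInterpolant

theorem haar_stmt8_general {T : ℝ} (hω : ConcaveOn ℝ (Ici 0) ω) (hω0 : 0 ≤ ω 0)
    (ht : Monotone t) (hT : IsLUB (range t) T)
    (hy : ∀ m n, m < n → ‖y n - y m‖ ≤ ω (t n - t m)) (hρ : IsLinearInterpolant t y ρ) :
    ∀ s ∈ Ico (t 0) T, ∀ x ∈ Ico (t 0) T, ‖ρ x - ρ s‖ ≤ ω |x - s| := by
  intro s hs x hx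
  wlog hsx : s ≤ x generalizing s x
  · rw [norm_sub_rev, abs_sub_comm]
    exact this x hx s hs (le_of_not_ge hsx)
  obtain ⟨m, hm⟩ := exists_mem_Ico_map_succ_of_isLUB hT hs
  obtain ⟨n, hn⟩ := exists_mem_Ico_map_succ_of_isLUB hT hx
  rw [abs_of_nonneg (sub_nonneg.2 hsx)]
  exact (hρ.graph_sub_graph_mem_modulusRegion hω hω0 ht hy hm hn hsx).2

end Interpolant

theorem isLinearInterpolant_of_eq_div_mul {t : ℕ → ℝ} {y : ℕ → ℂ} {ρ : ℝ → ℂ}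
    (hρ : ∀ n : ℕ, ∀ x ∈ Ico (t n) (t (n + 1)),
      ρ x = y n + ((y (n + 1) - y n) / ((t (n + 1) - t n : ℝ) : ℂ)) * ((x - t n : ℝ) : ℂ)) :
    IsLinearInterpolant t y ρ := by
  intro n x hx
  rw [hρ n x hx, lineMap_apply_module', Complex.real_smul, Complex.ofReal_div]
  ring

/-- Let `u ≥ 1`, let `(t n)` be a strictly increasing sequence in `[0,1]` with
`t 0 = 0` and supremum `T ≤ 1`, and let `(y n)` satisfy
`|y n - y m| ≤ (t n - t m)^(1/u)` for `m < n`. If `ρ : [0,T) → ℂ` is the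
piecewise-linear interpolant, i.e.
`ρ x = y n + ((y (n+1) - y n)/(t (n+1) - t n)) (x - t n)` on `[t n, t (n+1))`,
then `|ρ x - ρ s| ≤ 3 |x - s|^(1/u)` for all `s, x ∈ [0,T)`. -/
theorem haar_stmt8 (u : ℝ) (hu : 1 ≤ u) (t : ℕ → ℝ) (ht : StrictMono t)
    (ht0 : t 0 = 0) (htm : ∀ n, t n ∈ Set.Icc (0:ℝ) 1)
    (T : ℝ) (hT : IsLUB (Set.range t) T) (hT1 : T ≤ 1)
    (y : ℕ → ℂ) (hy : ∀ m n : ℕ, m < n → ‖y n - y m‖ ≤ (t n - t m) ^ (1 / u))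
    (ρ : ℝ → ℂ)
    (hρ : ∀ n : ℕ, ∀ x ∈ Set.Ico (t n) (t (n + 1)),
      ρ x = y n + ((y (n + 1) - y n) / ((t (n + 1) - t n : ℝ) : ℂ))
        * ((x - t n : ℝ) : ℂ)) :
    ∀ s ∈ Set.Ico (0:ℝ) T, ∀ x ∈ Set.Ico (0:ℝ) T,
      ‖ρ x - ρ s‖ ≤ 3 * |x - s| ^ (1 / u) := by
  have h_exp_nonneg : 0 ≤ 1 / u := by positivity
  have h_exp_le_one : 1 / u ≤ 1 := (div_le_one (by positivity)).2 hu
  intro s hs x hx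
  rw [← ht0] at hs hx
  calc ‖ρ x - ρ s‖ ≤ |x - s| ^ (1 / u) :=
        haar_stmt8_general (Real.concaveOn_rpow h_exp_nonneg h_exp_le_one)
          (Real.rpow_nonneg le_rfl _) ht.monotone hT hy
          (isLinearInterpolant_of_eq_div_mul hρ) s hs x hx
    _ ≤ 3 * |x - s| ^ (1 / u) := le_mul_of_one_le_left (by positivity) (by norm_num)
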